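/- For integers r ≥ 1 and k ≥ 2 with rk ≥ 3, the error term E_k^r(x) = V_k^r(x) − (2x)^k/ζ(rk) has exact order x^{k−1}: E_k^r(x) = O(x^{k−1}) and E_k^r(x) = Ω(x^{k−1}). -/

import Mathlib

open Filter Asymptotics

/-- `V_k^r(x)`: the number of `k`-tuples of nonzero integers with `|x_i| ≤ x`
that are relatively `r`-prime (no prime `p` with `p^r` dividing every `x_i`). -/
noncomputable def V (r k : ℕ) (x : ℝ) : ℕ :=
  Nat.card {t : Fin k → ℤ // (∀ i, t i ≠ 0 ∧ |(t i : ℝ)| ≤ x) ∧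
    ¬ ∃ p : ℕ, p.Prime ∧ ∀ i, (p : ℤ) ^ r ∣ t i}

/-- The Riemann zeta function on real arguments `s > 1`, as a series. -/
noncomputable def zetaR (s : ℝ) : ℝ := ∑' n : ℕ, 1 / ((n : ℝ) + 1) ^ s


lemma card_sym (M : ℕ) : ((Finset.Icc (-(M:ℤ)) M).erase 0).card = 2 * M := by
  rw [Finset.card_erase_of_mem (by simp)]
  simp; omega

lemma card_mult (N m : ℕ) (hm : 0 < m) :
    (((Finset.Icc (-(N:ℤ)) N).erase 0).filter (fun z => (m:ℤ) ∣ z)).card = 2 * (N / m) := by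
  rw [← card_sym (N / m)]
  symm
  apply Finset.card_bij (fun z _ => (m:ℤ) * z)
  · intro z hz
    simp only [Finset.mem_filter, Finset.mem_erase, Finset.mem_Icc] at hz ⊢
    have h1 : (m:ℤ) * (N / m : ℕ) ≤ N := by exact_mod_cast Nat.mul_div_le N m
    have hm' : (0:ℤ) < m := by exact_mod_cast hm
    refine ⟨⟨mul_ne_zero hm'.ne' hz.1, ?_, ?_⟩, dvd_mul_right _ _⟩ <;> nlinarith
  · intro a _ b _ h
    exact mul_left_cancel₀ (by exact_mod_cast hm.ne') h
  · intro z hz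
    simp only [Finset.mem_filter, Finset.mem_erase, Finset.mem_Icc] at hz
    obtain ⟨⟨h0, h1, h2⟩, c, rfl⟩ := hz
    refine ⟨c, ?_, rfl⟩
    have hm' : (0:ℤ) < m := by exact_mod_cast hm
    simp only [Finset.mem_erase, Finset.mem_Icc]
    push_cast
    refine ⟨fun h => h0 (by simp [h]), ?_, ?_⟩
    · rw [neg_le, Int.le_ediv_iff_mul_le hm']; nlinarith
    · rw [Int.le_ediv_iff_mul_le hm']; nlinarith

lemma sum_mu (n : ℕ) :
    ∑ d ∈ n.divisors, ArithmeticFunction.moebius d = if n = 1 then 1 else 0 := by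
  rw [← ArithmeticFunction.coe_mul_zeta_apply, ArithmeticFunction.moebius_mul_coe_zeta,
    ArithmeticFunction.one_apply]

lemma V_eq (r k : ℕ) (hr : 1 ≤ r) (hk : 2 ≤ k) (x : ℝ) (hx : 0 ≤ x) :
    (V r k x : ℤ) = ∑ d ∈ Finset.Icc 1 ⌊x⌋₊,
      ArithmeticFunction.moebius d * (2 * (⌊x⌋₊ / d ^ r : ℕ) : ℤ) ^ k := by
  classical
  set N := ⌊x⌋₊ with hN
  let S : Finset (Fin k → ℤ) := Fintype.piFinset (fun _ => (Finset.Icc (-(N:ℤ)) N).erase 0)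
  have memS : ∀ t : Fin k → ℤ, t ∈ S ↔ ∀ i, t i ≠ 0 ∧ |(t i : ℝ)| ≤ x := by
    intro t
    simp only [S, Fintype.mem_piFinset, Finset.mem_erase, Finset.mem_Icc]
    refine forall_congr' fun i => and_congr_right fun _ => ?_
    rw [← abs_le, Int.abs_eq_natAbs, ← Int.cast_abs, Int.abs_eq_natAbs, Int.cast_natCast,
      ← Nat.le_floor_iff hx, Int.ofNat_le]
  have hV : V r k x = (S.filter (fun t => ¬ ∃ p : ℕ, p.Prime ∧ ∀ i, (p : ℤ) ^ r ∣ t i)).card := by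
    unfold V
    rw [← Nat.card_eq_finsetCard]
    refine Nat.card_congr (Equiv.subtypeEquivRight fun t => ?_)
    rw [Finset.mem_filter, memS]
  have key : ∀ t ∈ S, (if ¬ ∃ p : ℕ, p.Prime ∧ ∀ i, (p : ℤ) ^ r ∣ t i then (1:ℤ) else 0) =
      ∑ d ∈ Finset.Icc 1 N, if ∀ i, ((d ^ r : ℕ) : ℤ) ∣ t i then ArithmeticFunction.moebius d else 0 := by
    intro t ht
    have hr0 : r ≠ 0 := by omega
    set g : ℕ := Finset.univ.gcd (fun i => (t i).natAbs) with hg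
    let i0 : Fin k := ⟨0, by omega⟩
    have hgi : g ∣ (t i0).natAbs := Finset.gcd_dvd (Finset.mem_univ i0)
    simp only [S, Fintype.mem_piFinset, Finset.mem_erase, Finset.mem_Icc] at ht
    have ht0 := ht i0
    have hg0 : g ≠ 0 := by
      intro h
      rw [h, zero_dvd_iff] at hgi
      omega
    have hd : ∀ d : ℕ, (∀ i, ((d ^ r : ℕ) : ℤ) ∣ t i) ↔ d ∣ Nat.floorRoot r g := by
      intro d
      rw [← Nat.pow_dvd_iff_dvd_floorRoot, hg, Finset.dvd_gcd_iff]
      simp only [Finset.mem_univ, true_implies, Int.natCast_dvd]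
    have hF : Nat.floorRoot r g ≠ 0 := by
      simp [Nat.floorRoot_eq_zero, hr0, hg0]
    simp only [hd]
    have hp : (¬ ∃ p : ℕ, p.Prime ∧ ∀ i, (p : ℤ) ^ r ∣ t i) ↔ Nat.floorRoot r g = 1 := by
      rw [Nat.eq_one_iff_not_exists_prime_dvd]
      push Not
      refine forall_congr' fun p => imp_congr_right fun _ => ?_
      rw [← hd]; push_cast; push Not; rfl
    simp only [hp]
    rw [← sum_mu, ← Finset.sum_filter]
    refine Finset.sum_congr ?_ fun _ _ => rfl
    ext d
    simp only [Nat.mem_divisors, Finset.mem_filter, Finset.mem_Icc]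
    constructor
    · rintro ⟨h, -⟩
      have hdpos : 0 < d := Nat.pos_of_dvd_of_pos h (Nat.pos_of_ne_zero hF)
      refine ⟨⟨hdpos, ?_⟩, h⟩
      have h1 := (hd d).2 h i0
      rw [Int.natCast_dvd] at h1
      have h2 := Nat.le_of_dvd (by omega) h1
      have h3 : d ≤ d ^ r := Nat.le_self_pow hr0 d
      omega
    · rintro ⟨_, h⟩; exact ⟨h, hF⟩
  rw [hV, Finset.card_filter]
  push_cast
  rw [Finset.sum_congr rfl key, Finset.sum_comm]
  refine Finset.sum_congr rfl fun d hd => ?_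
  rw [← Finset.sum_filter, Finset.sum_const, nsmul_eq_mul, mul_comm]
  congr 1
  have : S.filter (fun t => ∀ i, ((d ^ r : ℕ) : ℤ) ∣ t i) =
      Fintype.piFinset (fun _ : Fin k => ((Finset.Icc (-(N:ℤ)) N).erase 0).filter
        (fun z => ((d ^ r : ℕ):ℤ) ∣ z)) := by
    ext t
    simp only [S, Finset.mem_filter, Fintype.mem_piFinset]
    exact forall_and.symm
  rw [this, Fintype.card_piFinset_const, card_mult _ _ (pow_pos (Finset.mem_Icc.1 hd).1 r)]
  push_cast; rfl

lemma V_hasSum (r k : ℕ) (hr : 1 ≤ r) (hk : 2 ≤ k) (x : ℝ) (hx : 0 ≤ x) :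
    HasSum (fun d : ℕ => (ArithmeticFunction.moebius d : ℝ) * (2 * (⌊x / (d:ℝ) ^ r⌋₊ : ℝ)) ^ k)
      (V r k x) := by
  have h : (V r k x : ℝ) = ∑ d ∈ Finset.Icc 1 ⌊x⌋₊,
      (ArithmeticFunction.moebius d : ℝ) * (2 * (⌊x / (d:ℝ) ^ r⌋₊ : ℝ)) ^ k := by
    have := congrArg (Int.cast (R := ℝ)) (V_eq r k hr hk x hx)
    rw [Int.cast_natCast] at this
    rw [this, Int.cast_sum]
    refine Finset.sum_congr rfl fun d _ => ?_
    have : ⌊x / (d:ℝ) ^ r⌋₊ = ⌊x⌋₊ / d ^ r := by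
      rw [← Nat.floor_div_natCast]; push_cast; rfl
    rw [this, Int.cast_mul, Int.cast_pow, Int.cast_mul, Int.cast_natCast, Int.cast_ofNat]
  rw [h]
  refine hasSum_sum_of_ne_finset_zero fun d hd => ?_
  rw [Finset.mem_Icc] at hd
  rcases Nat.eq_zero_or_pos d with rfl | hd0
  · simp
  have : ⌊x / (d:ℝ) ^ r⌋₊ = 0 := by
    have h1 : ⌊x / (d:ℝ) ^ r⌋₊ = ⌊x⌋₊ / d ^ r := by
      rw [← Nat.floor_div_natCast]; push_cast; rfl
    have h3 : d ≤ d ^ r := Nat.le_self_pow (by omega) d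
    rw [h1]; apply Nat.div_eq_of_lt; omega
  rw [this]
  have : k ≠ 0 := by omega
  simp [this]

lemma pow_sub_le (k : ℕ) (a b : ℝ) (ha : 0 ≤ a) (hab : a ≤ b) :
    b ^ k - a ^ k ≤ k * b ^ (k - 1) * (b - a) := by
  have hb : 0 ≤ b := ha.trans hab
  have hc := (Commute.all b a).geom_sum₂_mul k
  rw [← hc]
  apply mul_le_mul_of_nonneg_right _ (by linarith)
  calc _ ≤ ∑ i ∈ Finset.range k, b ^ (k - 1) := by
        refine Finset.sum_le_sum fun i hi => ?_
        have hi' := Finset.mem_range.1 hi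
        calc b ^ i * a ^ (k - 1 - i) ≤ b ^ i * b ^ (k - 1 - i) := by gcongr
          _ = b ^ (k - 1) := by rw [← pow_add]; congr 1; omega
    _ = _ := by simp

lemma zeta_hasSum (s : ℕ) (hs : 2 ≤ s) :
    HasSum (fun d : ℕ => (ArithmeticFunction.moebius d : ℝ) / (d:ℝ) ^ s) (1 / zetaR s) := by
  have hs1 : 1 < ((s:ℕ) : ℂ).re := by simp; omega
  have h0 : s ≠ 0 := by omega
  have h1 := ArithmeticFunction.LSeries_zeta_mul_Lseries_moebius hs1
  have h2 := (ArithmeticFunction.LSeriesSummable_moebius_iff.2 hs1).LSeriesHasSum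
  have hz : LSeries (fun n => (ArithmeticFunction.zeta n : ℂ)) s = (zetaR s : ℂ) := by
    rw [ArithmeticFunction.LSeries_zeta_eq_riemannZeta hs1,
      zeta_eq_tsum_one_div_nat_add_one_cpow hs1, zetaR, Complex.ofReal_tsum]
    refine tsum_congr fun n => ?_
    rw [Complex.cpow_natCast, Real.rpow_natCast]; push_cast; rfl
  rw [hz] at h1
  have h3 : LSeries (fun n => (ArithmeticFunction.moebius n : ℂ)) s = ((1 / zetaR s : ℝ) : ℂ) := by
    push_cast
    exact eq_one_div_of_mul_eq_one_right h1
  rw [h3] at h2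
  unfold LSeriesHasSum at h2
  rw [← Complex.hasSum_ofReal]
  convert h2 using 2 with d
  rw [LSeries.term_def]
  split_ifs with h
  · simp [h]
  · rw [Complex.cpow_natCast]; push_cast; rfl

lemma E_bound (r k : ℕ) (hr : 1 ≤ r) (hk : 2 ≤ k) (hrk : 3 ≤ r * k) :
    ∃ C : ℝ, ∀ x : ℝ, 0 ≤ x → |(V r k x : ℝ) - (2 * x) ^ k / zetaR (r * k)| ≤ C * x ^ (k - 1) := by
  have h2 : 2 ≤ r * (k - 1) := by
    obtain ⟨j, rfl⟩ : ∃ j, k = j + 1 := ⟨k - 1, by omega⟩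
    simp only [Nat.add_sub_cancel]
    rcases Nat.lt_or_ge r 2 with h | h
    · have : r = 1 := by omega
      subst this; omega
    · nlinarith
  have hsum : Summable (fun d : ℕ => 1 / (d:ℝ) ^ (r * (k-1))) :=
    Real.summable_one_div_nat_pow.2 (by omega)
  refine ⟨2 ^ k * k * ∑' d : ℕ, 1 / (d:ℝ) ^ (r * (k-1)), fun x hx => ?_⟩
  have hZ := (zeta_hasSum (r * k) (by omega)).mul_left ((2 * x) ^ k)
  have hV := V_hasSum r k hr hk x hx
  have hd := hV.sub hZ
  have hE : (2 * x) ^ k * (1 / zetaR ((r * k : ℕ) : ℝ)) = (2 * x) ^ k / zetaR (r * k) := by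
    push_cast; ring
  rw [hE] at hd
  have hb := hsum.hasSum.mul_left (2 ^ k * k * x ^ (k - 1))
  have : 2 ^ k * k * (∑' d : ℕ, 1 / (d:ℝ) ^ (r * (k-1))) * x ^ (k-1) =
    2 ^ k * k * x ^ (k - 1) * ∑' d : ℕ, 1 / (d:ℝ) ^ (r * (k-1)) := by ring
  rw [this, ← Real.norm_eq_abs, ← hd.tsum_eq]
  refine tsum_of_norm_bounded hb fun d => ?_
  rcases Nat.eq_zero_or_pos d with rfl | hd0
  · simp; positivity
  have hd0' : (0:ℝ) < d := by exact_mod_cast hd0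
  set y := x / (d:ℝ) ^ r with hy
  have hy0 : 0 ≤ y := by positivity
  have hf1 := Nat.floor_le hy0
  have hf2 := Nat.lt_floor_add_one y
  have e1 : (ArithmeticFunction.moebius d : ℝ) * (2 * (⌊y⌋₊ : ℝ)) ^ k
      - (2 * x) ^ k * ((ArithmeticFunction.moebius d : ℝ) / (d:ℝ) ^ (r * k)) =
      (ArithmeticFunction.moebius d : ℝ) * (2 ^ k * -(y ^ k - (⌊y⌋₊ : ℝ) ^ k)) := by
    rw [hy, div_pow, ← pow_mul, mul_pow, mul_pow]; ring
  have e2 : 2 ^ k * k * x ^ (k - 1) * (1 / (d:ℝ) ^ (r * (k-1))) = 1 * (2 ^ k * (k * y ^ (k - 1))) := by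
    rw [hy, div_pow, ← pow_mul]; ring
  rw [e1, e2, Real.norm_eq_abs, abs_mul, abs_mul, abs_neg, abs_of_nonneg (by positivity : (0:ℝ) ≤ 2 ^ k),
    abs_of_nonneg (sub_nonneg.2 (pow_le_pow_left₀ (by positivity) hf1 k))]
  have hmu : |(ArithmeticFunction.moebius d : ℝ)| ≤ 1 := by
    exact_mod_cast ArithmeticFunction.abs_moebius_le_one (n := d)
  have hp := pow_sub_le k (⌊y⌋₊ : ℝ) y (by positivity) hf1
  have hp2 : k * y ^ (k-1) * (y - ⌊y⌋₊) ≤ k * y ^ (k-1) * 1 := by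
    gcongr; linarith
  have hnn := sub_nonneg.2 (pow_le_pow_left₀ (by positivity) hf1 k)
  exact mul_le_mul hmu (mul_le_mul_of_nonneg_left (by linarith) (by positivity))
    (mul_nonneg (by positivity) hnn) zero_le_one

lemma V_half (r k n : ℕ) : V r k ((n:ℝ) + 1/2) = V r k n := by
  unfold V
  refine Nat.card_congr (Equiv.subtypeEquivRight fun t => ?_)
  refine and_congr_left fun _ => forall_congr' fun i => and_congr_right fun _ => ?_
  rw [← Int.cast_abs, Int.abs_eq_natAbs, Int.cast_natCast]
  constructor
  · intro h
    have : ((t i).natAbs : ℝ) < ((n + 1 : ℕ) : ℝ) := by push_cast; linarith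
    have := Nat.cast_lt.1 this
    exact_mod_cast Nat.lt_succ_iff.1 this
  · intro h; linarith

theorem error_term_exact_order (r k : ℕ) (hr : 1 ≤ r) (hk : 2 ≤ k) (hrk : 3 ≤ r * k) :
    ((fun x : ℝ => (V r k x : ℝ) - (2 * x) ^ k / zetaR (r * k)) =O[atTop]
        fun x : ℝ => x ^ (k - 1)) ∧
    0 < limsup (fun x : ℝ =>
        |(V r k x : ℝ) - (2 * x) ^ k / zetaR (r * k)| / x ^ (k - 1)) atTop := by
  obtain ⟨C, hC⟩ := E_bound r k hr hk hrk
  refine ⟨?_, ?_⟩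
  · refine IsBigO.of_bound C ?_
    filter_upwards [eventually_ge_atTop 0] with x hx
    rw [Real.norm_eq_abs, Real.norm_eq_abs, abs_of_nonneg (pow_nonneg hx (k-1))]
    exact hC x hx
  · have hz : 0 < zetaR (r * k) := by
      unfold zetaR
      have hs : Summable (fun n : ℕ => 1 / ((n : ℝ) + 1) ^ ((r:ℝ) * k)) := by
        have h1 := (summable_nat_add_iff (f := fun n : ℕ => 1 / (n:ℝ) ^ (r * k)) 1).2
          (Real.summable_one_div_nat_pow.2 (by omega))
        refine h1.congr fun n => ?_
        rw [← Nat.cast_mul, Real.rpow_natCast]; push_cast; rfl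
      exact hs.tsum_pos (fun n => by positivity) 0 (by positivity)
    set Z := zetaR (r * k) with hZ
    set c : ℝ := 2 ^ k / Z / 2 ^ k / 4 with hc
    have hc0 : 0 < c := by positivity
    refine lt_of_lt_of_le hc0 (le_limsup_of_frequently_le ?_ ?_)
    · rw [frequently_atTop]
      intro a
      obtain ⟨n, hn⟩ := exists_nat_ge (max a 1)
      have hna : a ≤ n := le_trans (le_max_left _ _) hn
      have hn1 : (1:ℝ) ≤ n := le_trans (le_max_right _ _) hn
      by_contra! hcon
      have A := hcon n hna
      have B := hcon (n + 1/2) (by linarith)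
      rw [V_half] at B
      rw [div_lt_iff₀ (by positivity)] at A B
      have h1 : ((n:ℝ) + 1/2) ^ (k-1) ≤ 2 ^ (k-1) * (n:ℝ) ^ (k-1) := by
        rw [← mul_pow]; gcongr; linarith
      have h2 : (n:ℝ) ^ (k-1) * (1/2) ≤ ((n:ℝ) + 1/2) ^ k - (n:ℝ) ^ k := by
        obtain ⟨j, rfl⟩ : ∃ j, k = j + 1 := ⟨k - 1, by omega⟩
        simp only [Nat.add_sub_cancel]
        have : (n:ℝ) ^ j ≤ ((n:ℝ) + 1/2) ^ j := by gcongr; linarith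
        rw [pow_succ, pow_succ]; nlinarith
      have h3 := abs_sub_lt_iff.1 A
      have h4 := abs_sub_lt_iff.1 B
      have h5 : (2 * ((n:ℝ) + 1/2)) ^ k / Z - (2 * (n:ℝ)) ^ k / Z =
          2 ^ k / Z * (((n:ℝ) + 1/2) ^ k - (n:ℝ) ^ k) := by
        rw [mul_pow, mul_pow]; ring
      have h6 : 2 ^ k / Z * ((n:ℝ) ^ (k-1) * (1/2)) ≤
          2 ^ k / Z * (((n:ℝ) + 1/2) ^ k - (n:ℝ) ^ k) := by gcongr
      have h7 : c * ((n:ℝ) + 1/2) ^ (k-1) ≤ c * (2 ^ (k-1) * (n:ℝ) ^ (k-1)) := by gcongr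
      have h8 : 2 ^ k / Z * ((n:ℝ) ^ (k-1) * (1/2)) = c * (2 * 2 ^ k * (n:ℝ) ^ (k-1)) := by
        rw [hc]; field_simp; ring
      have h9 : c * (2 ^ (k-1) * (n:ℝ) ^ (k-1)) + c * (n:ℝ) ^ (k-1) ≤
          c * (2 * 2 ^ k * (n:ℝ) ^ (k-1)) := by
        rw [← mul_add]
        have g1 : (2:ℝ) ^ (k-1) ≤ 2 ^ k := pow_le_pow_right₀ (by norm_num) (by omega)
        have g2 : (1:ℝ) ≤ 2 ^ k := one_le_pow₀ (by norm_num)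
        have g3 : (0:ℝ) ≤ (n:ℝ) ^ (k-1) := by positivity
        gcongr
        nlinarith
      linarith [h3.1, h3.2, h4.1, h4.2]
    · refine ⟨C, ?_⟩
      rw [eventually_map]
      filter_upwards [eventually_gt_atTop 0] with x hx
      rw [div_le_iff₀ (by positivity)]
      exact hC x hx.le
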